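/- For every positive integer k, there exists an (11^k, 165^k) strategy for the GKS game; equivalently, C(165^k) ≤ 11^k for all k ≥ 1. -/

import Mathlib

/-- The string produced in the GKS game on `n` variables when Eve reveals the
indices in the order `π 0, π 1, …, π (n-1)`, Alice plays according to
strategy `a` (which, given the nonempty list of indices revealed so far,
outputs the bit placed at the most recently revealed index) at the first
`n - 1` revealed indices, and Eve places the bit `b` at the last revealed
index `π (n-1)`. -/
def gksString (n : ℕ) (a : List (Fin n) → Bool) (π : Equiv.Perm (Fin n))
    (b : Bool) : Fin n → Bool :=
  fun j =>
    if ((π.symm j : Fin n) : ℕ) = n - 1 then b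
    else a (((List.finRange n).take (((π.symm j : Fin n) : ℕ) + 1)).map (⇑π))

/-- `(a, B)` is a `(k, n)` strategy for the GKS game: for every order `π` in
which Eve reveals the indices and every bit `b` placed by Eve at the last
revealed index `π (n-1)`, the resulting string `x` satisfies
`π (n-1) ∈ B x` and `(B x).card ≤ k`. -/
def IsGKSStrategy (k n : ℕ) (a : List (Fin n) → Bool)
    (B : (Fin n → Bool) → Finset (Fin n)) : Prop :=
  ∀ (π : Equiv.Perm (Fin n)) (b : Bool),
    (∀ i : Fin n, (i : ℕ) = n - 1 → π i ∈ B (gksString n a π b)) ∧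
    (B (gksString n a π b)).card ≤ k

/-- There exists a `(k, n)` strategy for the GKS game. -/
def HasGKSStrategy (k n : ℕ) : Prop :=
  ∃ (a : List (Fin n) → Bool) (B : (Fin n → Bool) → Finset (Fin n)),
    IsGKSStrategy k n a B

/-- The cost `C(n)` of the GKS game on `n` variables: the least `k` for which
a `(k, n)` strategy exists. -/
noncomputable def gksCost (n : ℕ) : ℕ :=
  sInf {k : ℕ | HasGKSStrategy k n}

/-- Orbit representatives (under cyclic rotation of the 15 positions) of a matching which assigns
to each 4-subset `S` of the positions a codeword of the cyclic Hamming code vanishing on `S`;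
both are encoded as 15-bit masks. -/
def gksReps : List (ℕ × ℕ) := [
  (15, 18928), (23, 27560), (27, 25796), (29, 30690), (39, 27080), (43, 25428), (45, 14226),
  (51, 30660), (53, 16010), (57, 15300), (71, 32672), (75, 11156), (77, 31394), (83, 23436),
  (85, 11050), (89, 9634), (99, 32140), (101, 11658), (105, 32646), (113, 13454), (135, 16200),
  (139, 27972), (141, 16162), (147, 11876), (149, 32354), (153, 14150), (163, 20252),
  (165, 7962), (169, 5458), (177, 28942), (195, 22840), (197, 15656), (201, 27414),
  (209, 15630), (225, 26138), (263, 28248), (267, 31984), (269, 23280), (275, 30888),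
  (277, 24258), (281, 12868), (291, 28876), (293, 14024), (297, 31364), (305, 3780),
  (323, 6316), (325, 17954), (329, 28180), (337, 3758), (353, 4750), (387, 23144),
  (389, 10778), (393, 23632), (401, 7276), (417, 32264), (449, 30214), (523, 5492),
  (525, 15792), (531, 27012), (533, 32192), (537, 30914), (547, 5188), (549, 11336),
  (553, 24784), (561, 9672), (579, 4532), (581, 27808), (585, 2198), (593, 14378), (609, 1434),
  (643, 14704), (645, 6472), (649, 30768), (657, 23904), (673, 2388), (777, 1254),
  (785, 31746), (801, 29760), (1059, 4296), (1061, 6608), (1065, 23488), (1073, 2632),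
  (1091, 2328), (1093, 522), (1097, 900), (1105, 398), (1157, 346), (1161, 278), (1169, 30976),
  (1297, 106), (2185, 38)]

/-- Cyclic rotation of a 15-bit mask. -/
def gksRot (x s : ℕ) : ℕ := ((x <<< s) ||| (x >>> (15 - s))) &&& 32767

/-- All 1365 pairs (4-subset, codeword). -/
def gksPairs : List (ℕ × ℕ) :=
  gksReps.flatMap fun e => (List.range 15).map fun s => (gksRot e.1 s, gksRot e.2 s)

/-- Distinctness check, with a bit set as accumulator. -/
def gksChk : List ℕ → ℕ → Bool
  | [], _ => true
  | c :: cs, N => if N.testBit c then false else gksChk cs (N ||| (1 <<< c))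

theorem gksChk_nodup (l : List ℕ) (N : ℕ) (h : gksChk l N = true) :
    l.Nodup ∧ ∀ c ∈ l, N.testBit c = false := by
  induction l generalizing N with
  | nil => simp
  | cons c cs ih =>
    unfold gksChk at h
    split at h
    · simp at h
    · rename_i hc
      obtain ⟨h1, h2⟩ := ih _ h
      have h3 : ∀ d ∈ cs, N.testBit d = false ∧ d ≠ c := by
        intro d hd
        have := h2 d hd
        rw [Nat.testBit_or, Bool.or_eq_false_iff] at this
        refine ⟨this.1, ?_⟩
        rintro rfl
        have h4 := this.2
        simp [Nat.one_shiftLeft] at h4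
      refine ⟨List.nodup_cons.2 ⟨fun hm => (h3 c hm).2 rfl, h1⟩, ?_⟩
      intro d hd
      rcases List.mem_cons.1 hd with rfl | hd
      · simpa using hc
      · exact (h3 d hd).1

/-- The powers of a primitive element of the field with 16 elements (bit encoded): the columns of
the parity check matrix. -/
def gksCols : List (ℕ × ℕ) :=
  [(0, 1), (1, 2), (2, 4), (3, 8), (4, 3), (5, 6), (6, 12), (7, 11), (8, 5), (9, 10), (10, 7),
   (11, 14), (12, 15), (13, 13), (14, 9)]

/-- The syndrome of a mask. -/
def gksSynAux : List (ℕ × ℕ) → ℕ → ℕ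
  | [], _ => 0
  | p :: ps, c => (if c.testBit p.1 then p.2 else 0) ^^^ gksSynAux ps c

theorem gksSynAux_xor (l : List (ℕ × ℕ)) (a b : ℕ) :
    gksSynAux l (a ^^^ b) = gksSynAux l a ^^^ gksSynAux l b := by
  induction l with
  | nil => simp [gksSynAux]
  | cons p ps ih =>
    simp only [gksSynAux, ih, Nat.testBit_xor]
    generalize gksSynAux ps a = u
    generalize gksSynAux ps b = v
    cases a.testBit p.1 <;> cases b.testBit p.1 <;> simp
    · rw [← Nat.xor_assoc, Nat.xor_comm p.2 u, Nat.xor_assoc]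
    · rw [Nat.xor_assoc]
    · rw [Nat.xor_comm p.2 v, ← Nat.xor_assoc, Nat.xor_comm _ p.2, Nat.xor_assoc p.2 u v,
        ← Nat.xor_assoc p.2 p.2, Nat.xor_self, Nat.zero_xor]

theorem gksPairs_chk : gksChk (gksPairs.map Prod.snd) 0 = true := by
  decide +kernel

theorem gksPairs_ok : (gksPairs.all fun e => Nat.beq (e.1 &&& e.2) 0 && Nat.blt e.2 32768
    && Nat.beq (gksSynAux gksCols e.2) 0) = true := by
  decide +kernel

/-- Bit set of the 4-subsets which occur. -/
def gksCov : ℕ := gksPairs.foldl (fun N e => N ||| (1 <<< e.1)) 0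

theorem gksCov_full : ((List.range 15).all fun d => (List.range d).all fun c =>
    (List.range c).all fun b => (List.range b).all fun a =>
    gksCov.testBit (2 ^ a ||| 2 ^ b ||| 2 ^ c ||| 2 ^ d)) = true := by
  decide +kernel

theorem gksSyn_small : ∀ i j : Fin 15, ∀ p q : Bool,
    gksSynAux gksCols ((if p then 2 ^ i.1 else 0) ^^^ (if q then 2 ^ j.1 else 0)) = 0 →
    (if p then 2 ^ i.1 else 0) = (if q then 2 ^ j.1 else 0) := by
  decide +kernel

theorem gksCov_mem (l : List (ℕ × ℕ)) (N m : ℕ)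
    (h : (l.foldl (fun N e => N ||| (1 <<< e.1)) N).testBit m = true) :
    N.testBit m = true ∨ ∃ e ∈ l, e.1 = m := by
  induction l generalizing N with
  | nil => exact Or.inl h
  | cons e l ih =>
    rcases ih _ h with h | ⟨e', he', h⟩
    · rw [Nat.testBit_or, Bool.or_eq_true] at h
      rcases h with h | h
      · exact Or.inl h
      · right
        refine ⟨e, by simp, ?_⟩
        rw [Nat.one_shiftLeft, Nat.testBit_two_pow] at h
        simpa using h
    · exact Or.inr ⟨e', by simp [he'], h⟩

theorem gksDist {c c' : ℕ} (hc : c < 32768) (hc' : c' < 32768)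
    (h : gksSynAux gksCols c = 0) (h' : gksSynAux gksCols c' = 0) (i j : Fin 15)
    (hd : ∀ k : Fin 15, k ≠ i → k ≠ j → c.testBit k.1 = c'.testBit k.1) : c = c' := by
  have key : ∃ p q : Bool, c ^^^ c' =
      (if p then 2 ^ i.1 else 0) ^^^ (if q then 2 ^ j.1 else 0) := by
    have h2 : ∀ k, (c ^^^ c').testBit k = true → k = i.1 ∨ k = j.1 := by
      intro k hk
      by_contra hcon
      push Not at hcon
      rw [Nat.testBit_xor] at hk
      by_cases hk15 : k < 15
      · have := hd ⟨k, hk15⟩ (fun e => hcon.1 (by rw [← e])) (fun e => hcon.2 (by rw [← e]))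
        simp only at this
        simp [this] at hk
      · have hp : 32768 ≤ 2 ^ k := by
          calc 32768 = 2 ^ 15 := by norm_num
            _ ≤ 2 ^ k := Nat.pow_le_pow_right (by norm_num) (by omega)
        rw [Nat.testBit_lt_two_pow (lt_of_lt_of_le hc hp),
          Nat.testBit_lt_two_pow (lt_of_lt_of_le hc' hp)] at hk
        simp at hk
    generalize c ^^^ c' = d at h2
    by_cases hij : i = j
    · refine ⟨d.testBit i.1, false, Nat.eq_of_testBit_eq fun k => ?_⟩
      by_cases hk : k = i.1
      · subst hk
        cases hdd : d.testBit i.1 <;> simp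
      · have : d.testBit k = false := by
          by_contra hh
          rcases h2 k (by simpa using hh) with e | e
          · exact hk e
          · exact hk (by rw [e, hij])
        rw [this]
        cases d.testBit i.1 <;> simp [Nat.testBit_two_pow, Ne.symm hk]
    · have hij' : i.1 ≠ j.1 := fun e => hij (Fin.ext e)
      refine ⟨d.testBit i.1, d.testBit j.1, Nat.eq_of_testBit_eq fun k => ?_⟩
      by_cases hk : k = i.1
      · subst hk
        cases hdd : d.testBit i.1 <;> cases d.testBit j.1 <;>
          simp [Nat.testBit_two_pow, hij'.symm]
      · by_cases hk2 : k = j.1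
        · subst hk2
          cases hdd : d.testBit j.1 <;> cases d.testBit i.1 <;>
            simp [Nat.testBit_two_pow, hij']
        · have : d.testBit k = false := by
            by_contra hh
            rcases h2 k (by simpa using hh) with e | e
            · exact hk e
            · exact hk2 e
          rw [this]
          cases d.testBit i.1 <;> cases d.testBit j.1 <;>
            simp [Nat.testBit_two_pow, Ne.symm hk, Ne.symm hk2]
  obtain ⟨p, q, hpq⟩ := key
  have h0 : gksSynAux gksCols (c ^^^ c') = 0 := by rw [gksSynAux_xor, h, h']; rfl
  rw [hpq] at h0
  have := gksSyn_small i j p q h0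
  rw [this, Nat.xor_self] at hpq
  exact Nat.xor_eq_zero_iff.1 hpq

/-- A 4-subset is given by four increasing positions. -/
theorem gks_four (S : Finset (Fin 15)) (hS : S.card = 4) :
    ∃ a b c d : Fin 15, a < b ∧ b < c ∧ c < d ∧ S = {a, b, c, d} := by
  let f := S.orderEmbOfFin hS
  refine ⟨f 0, f 1, f 2, f 3, f.strictMono (by decide), f.strictMono (by decide),
    f.strictMono (by decide), ?_⟩
  have h := S.range_orderEmbOfFin hS
  ext x
  rw [← Finset.mem_coe, ← h]
  simp only [Set.mem_range, Finset.mem_insert, Finset.mem_singleton]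
  constructor
  · rintro ⟨y, rfl⟩
    fin_cases y <;> simp [f]
  · rintro (rfl | rfl | rfl | rfl) <;> exact ⟨_, rfl⟩

theorem gks_code : ∃ g : Finset (Fin 15) → Fin 15 → Bool,
    (∀ S, S.card = 4 → ∀ i ∈ S, g S i = false) ∧
    (∀ S S', S.card = 4 → S'.card = 4 → ∀ i j : Fin 15,
      (∀ k, k ≠ i → k ≠ j → g S k = g S' k) → S = S') := by
  have h1 : ∀ S : Finset (Fin 15), ∃ e : ℕ × ℕ, S.card = 4 →
      e ∈ gksPairs ∧ ∀ k : Fin 15, e.1.testBit k.1 = true ↔ k ∈ S := by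
    intro S
    by_cases hS : S.card = 4
    · obtain ⟨a, b, c, d, hab, hbc, hcd, rfl⟩ := gks_four S hS
      have hcov := gksCov_full
      simp only [List.all_eq_true, List.mem_range] at hcov
      have h := hcov d.1 d.2 c.1 hcd b.1 hbc a.1 hab
      rcases gksCov_mem _ _ _ h with h | ⟨e, he, h⟩
      · simp at h
      · refine ⟨e, fun _ => ⟨he, fun k => ?_⟩⟩
        rw [h]
        simp only [Nat.testBit_or, Nat.testBit_two_pow, Bool.or_eq_true, decide_eq_true_eq,
          Finset.mem_insert, Finset.mem_singleton, Fin.ext_iff]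
        omega
    · exact ⟨(0, 0), fun h => absurd h hS⟩
  choose E hE using h1
  have hok : ∀ e ∈ gksPairs, e.1 &&& e.2 = 0 ∧ e.2 < 32768 ∧ gksSynAux gksCols e.2 = 0 := by
    have := gksPairs_ok
    rw [List.all_eq_true] at this
    intro e he
    have := this e he
    rw [Bool.and_eq_true, Bool.and_eq_true] at this
    exact ⟨Nat.eq_of_beq_eq_true this.1.1, by simpa [Nat.blt] using this.1.2,
      Nat.eq_of_beq_eq_true this.2⟩
  refine ⟨fun S k => (E S).2.testBit k.1, ?_, ?_⟩
  · intro S hS i hi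
    obtain ⟨h1, h2⟩ := hE S hS
    have h3 := (h2 i).2 hi
    have h4 := congrArg (fun n => n.testBit i.1) (hok _ h1).1
    simpa [Nat.testBit_and, h3] using h4
  · intro S S' hS hS' i j h
    obtain ⟨h1, h2⟩ := hE S hS
    obtain ⟨h1', h2'⟩ := hE S' hS'
    have hc := gksDist (hok _ h1).2.1 (hok _ h1').2.1 (hok _ h1).2.2 (hok _ h1').2.2 i j h
    have hn := (gksChk_nodup _ _ gksPairs_chk).1
    have he := List.inj_on_of_nodup_map hn h1 h1' hc
    ext k
    rw [← h2, ← h2', he]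

/-- `GKSPlay a x t`: the string `x` can result from a play against Alice's strategy `a` in which
the last revealed index is `t` (where Eve's bit is arbitrary). -/
def GKSPlay {ι : Type} (a : List ι → Bool) (x : ι → Bool) (t : ι) : Prop :=
  ∃ l : List ι, (l ++ [t]).Nodup ∧ (∀ i, i ∈ l ++ [t]) ∧
    ∀ p i s, l = p ++ i :: s → x i = a (p ++ [i])

/-- A strategy over an arbitrary index type. -/
def GKSAbs (K : ℕ) (ι : Type) : Prop :=
  ∃ (a : List ι → Bool) (B : (ι → Bool) → Finset ι),
    ∀ x t, GKSPlay a x t → t ∈ B x ∧ (B x).card ≤ K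

theorem gks_bridge {n K : ℕ} (hn : 0 < n) {ι : Type} (e : Fin n ≃ ι) (h : GKSAbs K ι) :
    HasGKSStrategy K n := by
  obtain ⟨a, B, hB⟩ := h
  refine ⟨fun l => a (l.map e), fun x => (B (x ∘ e.symm)).map e.symm.toEmbedding, ?_⟩
  intro π b
  set x := gksString n (fun l => a (l.map e)) π b with hx
  let last : Fin n := ⟨n - 1, by omega⟩
  have hplay : GKSPlay a (x ∘ e.symm) (e (π last)) := by
    have hsplit : List.finRange n = (List.finRange n).take (n - 1) ++ [last] := by
      conv_lhs => rw [← List.take_append_drop (n - 1) (List.finRange n)]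
      congr 1
      apply List.ext_getElem
      · simp; omega
      · intro i h1 h2
        simp at h2
        subst h2
        simp [last]
    have hall : ((List.finRange n).take (n - 1)).map (fun i => e (π i)) ++ [e (π last)]
        = (List.finRange n).map (fun i => e (π i)) := by
      conv_rhs => rw [hsplit]
      simp
    refine ⟨((List.finRange n).take (n - 1)).map (fun i => e (π i)), ?_, ?_, ?_⟩
    · rw [hall]
      exact (List.nodup_finRange n).map (e.injective.comp π.injective)
    · intro i
      rw [hall, List.mem_map]
      exact ⟨π.symm (e.symm i), by simp, by simp⟩
    · intro p i s hl
      have hlen := congrArg List.length hl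
      simp at hlen
      have hp : p.length < n - 1 := by omega
      have hi : i = e (π ⟨p.length, by omega⟩) := by
        have := congrArg (fun l => l[p.length]?) hl
        simp [List.getElem?_take, hp] at this
        exact this.symm
      have hpi : p ++ [i] = ((List.finRange n).take (p.length + 1)).map (fun i => e (π i)) := by
        have h2 := congrArg (List.take (p.length + 1)) hl
        rw [← List.map_take, List.take_take, min_eq_left (by omega)] at h2
        rw [h2]
        simp [List.take_append]
      rw [hpi, hi, hx]
      simp only [gksString, Function.comp, Equiv.symm_apply_apply]
      rw [if_neg (by omega), List.map_map]
      rfl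
  obtain ⟨h1, h2⟩ := hB _ _ hplay
  refine ⟨?_, by simpa using h2⟩
  intro i hi
  have : i = last := Fin.ext hi
  subst this
  rw [Finset.mem_map]
  exact ⟨_, h1, by simp⟩

theorem gks_split_unique {α : Type} {p p' s s' : List α} {i : α}
    (hn : (p ++ i :: s).Nodup) (h : p ++ i :: s = p' ++ i :: s') : p = p' ∧ s = s' := by
  induction p generalizing p' with
  | nil =>
    cases p' with
    | nil => simpa using h
    | cons c p' =>
      simp only [List.nil_append, List.cons_append, List.cons.injEq] at h
      obtain ⟨rfl, rfl⟩ := h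
      simp at hn
  | cons c p ih =>
    cases p' with
    | nil =>
      simp only [List.nil_append, List.cons_append, List.cons.injEq] at h
      obtain ⟨rfl, rfl⟩ := h
      simp at hn
    | cons c' p' =>
      simp only [List.cons_append, List.cons.injEq] at h
      obtain ⟨rfl, h⟩ := h
      obtain ⟨rfl, rfl⟩ := ih (List.nodup_cons.1 hn).2 h
      exact ⟨rfl, rfl⟩

theorem gks_dedup_append {α : Type} [DecidableEq α] (l₁ l₂ : List α) :
    (l₁ ++ l₂).dedup = (l₁.dedup.filter (fun a => decide (a ∉ l₂))) ++ l₂.dedup := by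
  induction l₁ with
  | nil => simp
  | cons c l ih =>
    by_cases hc : c ∈ l
    · rw [List.cons_append, List.dedup_cons_of_mem (by simp [hc]), ih, List.dedup_cons_of_mem hc]
    · by_cases hc2 : c ∈ l₂
      · rw [List.cons_append, List.dedup_cons_of_mem (by simp [hc2]), ih,
          List.dedup_cons_of_notMem hc]
        simp [hc2]
      · rw [List.cons_append, List.dedup_cons_of_notMem (by simp [hc, hc2]), ih,
          List.dedup_cons_of_notMem hc]
        simp [hc2]

section Comp

open Classical in
/-- The list of indices revealed so far within block `j`. -/
noncomputable def gksBlk {ι κ : Type} (j : ι) (L : List (ι × κ)) : List κ :=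
  (L.filter (fun q => decide (q.1 = j))).map Prod.snd

open Classical in
/-- Completed blocks, in order of completion. -/
noncomputable def gksDone {ι κ : Type} (L : List (ι × κ)) : List ι :=
  (L.map Prod.fst).dedup.filter (fun j => decide (∀ i, (j, i) ∈ L))

open Classical in
/-- The string which Alice's strategy `a` writes when indices are revealed in order `l`. -/
noncomputable def gksStr {κ : Type} (a : List κ → Bool) (l : List κ) : κ → Bool :=
  fun i => if h : ∃ p, ∃ s, l = p ++ i :: s then a (h.choose ++ [i]) else false

open Classical in
/-- The composed strategy for Alice. -/
noncomputable def gksComp {ι κ : Type} (a₁ : List ι → Bool) (a₂ : List κ → Bool)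
    (f : (κ → Bool) → Bool) (L : List (ι × κ)) : Bool :=
  match L.getLast? with
  | none => false
  | some (j, i) =>
    if ∀ i', (j, i') ∈ L then
      decide (f (Function.update (gksStr a₂ (gksBlk j L)) i true) = a₁ (gksDone L))
    else a₂ (gksBlk j L)

theorem gksBlk_append {ι κ : Type} (j : ι) (L M : List (ι × κ)) :
    gksBlk j (L ++ M) = gksBlk j L ++ gksBlk j M := by
  simp [gksBlk]

theorem gksBlk_cons {ι κ : Type} (j : ι) (i : κ) (M : List (ι × κ)) :
    gksBlk j ((j, i) :: M) = i :: gksBlk j M := by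
  simp [gksBlk]

theorem mem_gksBlk {ι κ : Type} (j : ι) (i : κ) (L : List (ι × κ)) :
    i ∈ gksBlk j L ↔ (j, i) ∈ L := by
  simp [gksBlk]

theorem gksBlk_nodup {ι κ : Type} (j : ι) (L : List (ι × κ)) (h : L.Nodup) :
    (gksBlk j L).Nodup := by
  unfold gksBlk
  refine List.Nodup.map_on ?_ (h.filter _)
  rintro ⟨a, b⟩ h1 ⟨c, d⟩ h2 h3
  simp at h1 h2 h3
  simp [h1, h2, h3]

theorem gksStr_eq {κ : Type} (a : List κ → Bool) (p s : List κ) (i : κ)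
    (hn : (p ++ i :: s).Nodup) : gksStr a (p ++ i :: s) i = a (p ++ [i]) := by
  have h : ∃ p', ∃ s', p ++ i :: s = p' ++ i :: s' := ⟨p, s, rfl⟩
  unfold gksStr
  rw [dif_pos h]
  obtain ⟨s', hs'⟩ := h.choose_spec
  rw [← (gks_split_unique hn hs').1]

theorem gks_compose {ι κ : Type} [Nonempty κ] (a₁ : List ι → Bool) (a₂ : List κ → Bool)
    (f : (κ → Bool) → Bool)
    (hf : ∀ x t, GKSPlay a₂ x t → ∀ x' : κ → Bool, (∀ k, k ≠ t → x' k = x k) → x' t ≠ x t →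
      f x' ≠ f x)
    (x : ι × κ → Bool) (t : ι × κ) (h : GKSPlay (gksComp a₁ a₂ f) x t) :
    GKSPlay a₁ (fun j => f (fun i => x (j, i))) t.1 ∧
    GKSPlay a₂ (fun i => x (t.1, i)) t.2 ∧
    ∀ j, ∃ i, GKSPlay a₂ (fun i => x (j, i)) i := by
  classical
  obtain ⟨l, hnd, hall, hl⟩ := h
  -- splitting at any entry other than the last
  have hmove : ∀ P j i Q, l ++ [t] = P ++ (j, i) :: Q → (j, i) ≠ t →
      x (j, i) = gksComp a₁ a₂ f (P ++ [(j, i)]) := by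
    intro P j i Q h hne
    rcases List.eq_nil_or_concat Q with rfl | ⟨Q', q, rfl⟩
    · have := congrArg List.getLast? h
      simp at this
      exact absurd this.symm hne
    · have h' : l ++ [t] = (P ++ (j, i) :: Q') ++ [q] := by rw [h]; simp
      have := (List.append_inj' h' rfl).1
      exact hl P _ Q' this
  -- inner plays
  have hinner_q : ∀ j q i, gksBlk j (l ++ [t]) = q ++ [i] →
      ∀ p i' s, q = p ++ i' :: s → x (j, i') = a₂ (p ++ [i']) := by
    intro j q i hq p i' s hp
    obtain ⟨P, Q, hPQ⟩ := List.append_of_mem (hall (j, i'))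
    have hb : gksBlk j (l ++ [t]) = gksBlk j P ++ i' :: gksBlk j Q := by
      rw [hPQ, gksBlk_append, gksBlk_cons]
    have hb2 : p ++ i' :: (s ++ [i]) = gksBlk j P ++ i' :: gksBlk j Q := by
      rw [← hb, hq, hp]; simp
    have hu := gks_split_unique (by rw [hb2, ← hb]; exact gksBlk_nodup j _ hnd) hb2
    have hiQ : (j, i) ∈ Q := by rw [← mem_gksBlk, ← hu.2]; simp
    have hne : (j, i') ≠ t := by
      rintro rfl
      have h' : l ++ (j, i') :: [] = P ++ (j, i') :: Q := hPQ
      have := (gks_split_unique hnd h').2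
      rw [← this] at hiQ
      simp at hiQ
    have hiP : (j, i) ∉ P ++ [(j, i')] := by
      have h3 : ((P ++ [(j, i')]) ++ Q).Nodup := by
        have := hnd
        rw [hPQ] at this
        simpa using this
      intro hm
      exact (List.disjoint_of_nodup_append h3) hm hiQ
    have hx := hmove P j i' Q hPQ hne
    have hnot : ¬ ∀ i'', (j, i'') ∈ P ++ [(j, i')] := fun h => hiP (h i)
    rw [hx]
    unfold gksComp
    rw [List.getLast?_concat]
    simp only
    rw [if_neg hnot, gksBlk_append, gksBlk_cons, hu.1]
    rfl
  have hinner : ∀ j q i, gksBlk j (l ++ [t]) = q ++ [i] →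
      GKSPlay a₂ (fun i => x (j, i)) i := by
    intro j q i hq
    have hndq : (q ++ [i]).Nodup := hq ▸ gksBlk_nodup j _ hnd
    exact ⟨q, hndq, fun i' => by rw [← hq, mem_gksBlk]; exact hall _, hinner_q j q i hq⟩
  have hex : ∀ j, ∃ q i, gksBlk j (l ++ [t]) = q ++ [i] := by
    intro j
    rcases List.eq_nil_or_concat (gksBlk j (l ++ [t])) with h | ⟨q, i, h⟩
    · obtain ⟨i⟩ := ‹Nonempty κ›
      have := (mem_gksBlk j i (l ++ [t])).2 (hall _)
      rw [h] at this
      simp at this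
    · exact ⟨q, i, by rw [h, List.concat_eq_append]⟩
  refine ⟨?_, ?_, ?_⟩
  · -- outer play
    have hO : ((l ++ [t]).map Prod.fst).dedup =
        (((l.map Prod.fst).dedup.filter (fun a => decide (a ∉ [t.1])))) ++ [t.1] := by
      rw [List.map_append, gks_dedup_append]
      rfl
    refine ⟨(l.map Prod.fst).dedup.filter (fun a => decide (a ∉ [t.1])), ?_, ?_, ?_⟩
    · rw [← hO]; exact List.nodup_dedup _
    · intro j
      rw [← hO, List.mem_dedup, List.mem_map]
      obtain ⟨i⟩ := ‹Nonempty κ›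
      exact ⟨(j, i), hall _, rfl⟩
    · intro p j s hp
      obtain ⟨q, i, hq⟩ := hex j
      have hndO : (p ++ j :: (s ++ [t.1])).Nodup := by
        have : p ++ j :: (s ++ [t.1]) = ((l ++ [t]).map Prod.fst).dedup := by
          rw [hO, hp]; simp
        rw [this]; exact List.nodup_dedup _
      have hjt : j ≠ t.1 := by
        rintro rfl
        have := hndO.of_append_right
        simp at this
      obtain ⟨P, Q, hPQ⟩ := List.append_of_mem (hall (j, i))
      have hb : gksBlk j (l ++ [t]) = gksBlk j P ++ i :: gksBlk j Q := by
        rw [hPQ, gksBlk_append, gksBlk_cons]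
      have hb2 : q ++ i :: [] = gksBlk j P ++ i :: gksBlk j Q := by rw [← hb, hq]
      have hndq : (q ++ [i]).Nodup := hq ▸ gksBlk_nodup j _ hnd
      have hu := gks_split_unique hndq hb2
      have hjQ : j ∉ Q.map Prod.fst := by
        intro hm
        obtain ⟨⟨j', i'⟩, hm', rfl⟩ := List.mem_map.1 hm
        have := (mem_gksBlk j' i' Q).2 hm'
        simp only at hu
        rw [← hu.2] at this
        simp at this
      have h3 : ((P ++ [(j, i)]) ++ Q).Nodup := by
        have := hnd
        rw [hPQ] at this
        simpa using this
      have hdisj := List.disjoint_of_nodup_append h3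
      have hmem : ∀ z, z ∈ P ++ [(j, i)] ∨ z ∈ Q := by
        intro z
        have := hall z
        rw [hPQ] at this
        simp only [List.mem_append, List.mem_cons] at this ⊢
        simp only [List.not_mem_nil]
        tauto
      have hcomp : ∀ j', j' ∉ Q.map Prod.fst ↔ ((∀ i', (j', i') ∈ P ++ [(j, i)])) := by
        intro j'
        constructor
        · intro hj' i'
          rcases hmem (j', i') with h | h
          · exact h
          · exact absurd (List.mem_map.2 ⟨_, h, rfl⟩) hj'
        · intro h hm
          obtain ⟨⟨j'', i'⟩, hm', rfl⟩ := List.mem_map.1 hm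
          exact hdisj (h i') hm'
      have hdone : gksDone (P ++ [(j, i)]) = p ++ [j] := by
        have h4 : ((l ++ [t]).map Prod.fst).dedup =
            gksDone (P ++ [(j, i)]) ++ (Q.map Prod.fst).dedup := by
          have : l ++ [t] = (P ++ [(j, i)]) ++ Q := by rw [hPQ]; simp
          rw [this, List.map_append, gks_dedup_append]
          congr 1
          unfold gksDone
          apply List.filter_congr
          intro j' _
          exact decide_eq_decide.2 (hcomp j')
        have h5 : ∃ D, gksDone (P ++ [(j, i)]) = D ++ [j] := by
          unfold gksDone
          rw [List.map_append, gks_dedup_append, List.filter_append]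
          refine ⟨_, congrArg _ ?_⟩
          have hj := (hcomp j).1 hjQ
          simpa using hj
        obtain ⟨D, hD⟩ := h5
        rw [hD] at h4 ⊢
        have h6 : p ++ j :: (s ++ [t.1]) = D ++ j :: (Q.map Prod.fst).dedup := by
          have h7 : p ++ j :: (s ++ [t.1]) = ((l ++ [t]).map Prod.fst).dedup := by
            rw [hO, hp]; simp
          rw [h7, h4]; simp
        rw [(gks_split_unique hndO h6).1]
      have hpl := hinner j q i hq
      have hx := hmove P j i Q hPQ (fun h => hjt (by rw [← h]))
      unfold gksComp at hx
      rw [List.getLast?_concat] at hx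
      simp only at hx
      rw [if_pos ((hcomp j).1 hjQ), hdone] at hx
      have hblk : gksBlk j (P ++ [(j, i)]) = q ++ [i] := by
        rw [gksBlk_append, gksBlk_cons, hu.1]; rfl
      rw [hblk] at hx
      -- the string of the block
      have hstr : ∀ b, Function.update (gksStr a₂ (q ++ [i])) i b =
          Function.update (fun i => x (j, i)) i b := by
        intro b
        funext k
        by_cases hk : k = i
        · subst hk; simp
        · rw [Function.update_of_ne hk, Function.update_of_ne hk]
          have hkq : k ∈ q := by
            have : k ∈ q ++ [i] := by rw [← hq, mem_gksBlk]; exact hall _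
            simpa [hk] using this
          obtain ⟨u, v, huv⟩ := List.append_of_mem hkq
          have e1 : q ++ [i] = u ++ k :: (v ++ [i]) := by rw [huv]; simp
          rw [e1, gksStr_eq _ _ _ _ (e1 ▸ hndq)]
          -- use the inner play with the order `q`
          have := hinner_q j q i hq u k v huv
          exact this.symm
      rw [hstr] at hx
      have hne : f (Function.update (fun i => x (j, i)) i true) ≠
          f (Function.update (fun i => x (j, i)) i false) := by
        have h8 := hf _ _ hpl (Function.update (fun i => x (j, i)) i (!x (j, i)))
          (fun k hk => Function.update_of_ne hk _ _) (by simp)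
        have h9 := Function.update_eq_self i (fun i => x (j, i))
        rw [← h9] at h8
        cases hxx : x (j, i) <;> simp [hxx] at h8 ⊢
        · exact h8
        · exact fun h => h8 h.symm
      have hself : Function.update (fun i => x (j, i)) i (x (j, i)) = fun i => x (j, i) :=
        Function.update_eq_self i (fun i => x (j, i))
      show f (fun i => x (j, i)) = _
      rw [← hself]
      generalize a₁ (p ++ [j]) = w at hx
      generalize hF : f (Function.update (fun i => x (j, i)) i true) = ft at *
      generalize hG : f (Function.update (fun i => x (j, i)) i false) = ff at *
      cases hxx : x (j, i) <;> rw [hxx] at hx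
      · rw [hG]
        revert hx hne
        cases ft <;> cases ff <;> cases w <;> simp
      · rw [hF]
        simpa using hx.symm
  · obtain ⟨q, i, hq⟩ := hex t.1
    have h1 : gksBlk t.1 (l ++ [t]) = gksBlk t.1 l ++ [t.2] := by
      rw [gksBlk_append]; congr 1
      exact gksBlk_cons t.1 t.2 []
    exact hinner _ _ _ h1
  · intro j
    obtain ⟨q, i, hq⟩ := hex j
    exact ⟨i, hinner j q i hq⟩

end Comp

theorem gks_prod {ι κ : Type} [Fintype ι] [Fintype κ] [Nonempty κ] {K : ℕ} (w : Bool → ℕ)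
    (a₁ : List ι → Bool) (B₁ : (ι → Bool) → Finset ι)
    (h₁ : ∀ y t, GKSPlay a₁ y t → t ∈ B₁ y ∧ ∑ j ∈ B₁ y, w (y j) ≤ K)
    (a₂ : List κ → Bool) (B₂ : (κ → Bool) → Finset κ) (f : (κ → Bool) → Bool)
    (h₂ : ∀ x t, GKSPlay a₂ x t → t ∈ B₂ x ∧ (B₂ x).card ≤ w (f x))
    (hf : ∀ x t, GKSPlay a₂ x t → ∀ x' : κ → Bool, (∀ k, k ≠ t → x' k = x k) → x' t ≠ x t →
      f x' ≠ f x) : GKSAbs K (ι × κ) := by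
  classical
  refine ⟨gksComp a₁ a₂ f, fun x => (B₁ (fun j => f (fun i => x (j, i)))).biUnion
    (fun j => (B₂ (fun i => x (j, i))).image (fun i => (j, i))), ?_⟩
  intro x t h
  obtain ⟨g1, g2, g3⟩ := gks_compose a₁ a₂ f hf x t h
  obtain ⟨k1, k2⟩ := h₁ _ _ g1
  constructor
  · rw [Finset.mem_biUnion]
    exact ⟨t.1, k1, Finset.mem_image.2 ⟨t.2, (h₂ _ _ g2).1, rfl⟩⟩
  · refine Finset.card_biUnion_le.trans (le_trans (Finset.sum_le_sum ?_) k2)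
    intro j _
    obtain ⟨i, hi⟩ := g3 j
    exact Finset.card_image_le.trans (h₂ _ _ hi).2

theorem gks_mul {ι κ : Type} [Fintype ι] [Fintype κ] [Nonempty κ] {K₁ K₂ : ℕ}
    (h₁ : GKSAbs K₁ ι) (h₂ : GKSAbs K₂ κ) : GKSAbs (K₁ * K₂) (ι × κ) := by
  classical
  obtain ⟨a₁, B₁, h₁⟩ := h₁
  obtain ⟨a₂, B₂, h₂⟩ := h₂
  refine gks_prod (fun _ => K₂) a₁ B₁ (fun y t h => ⟨(h₁ y t h).1, ?_⟩) a₂ B₂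
    (fun x => decide ((∑ i, if x i then (1 : ZMod 2) else 0) = 0)) h₂ ?_
  · rw [Finset.sum_const, smul_eq_mul]
    exact Nat.mul_le_mul_right _ (h₁ y t h).2
  · intro x t _ x' hx ht
    have e : ∀ z : κ → Bool, (∑ i, if z i then (1 : ZMod 2) else 0) =
        (if z t then (1 : ZMod 2) else 0) +
          ∑ i ∈ Finset.univ.erase t, if z i then (1 : ZMod 2) else 0 :=
      fun z => (Finset.add_sum_erase _ _ (Finset.mem_univ t)).symm
    have e2 : (∑ i ∈ Finset.univ.erase t, if x' i then (1 : ZMod 2) else 0) =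
        ∑ i ∈ Finset.univ.erase t, if x i then (1 : ZMod 2) else 0 := by
      refine Finset.sum_congr rfl fun i hi => ?_
      rw [hx i (Finset.ne_of_mem_erase hi)]
    rw [e x, e x', e2]
    generalize (∑ i ∈ Finset.univ.erase t, if x i then (1 : ZMod 2) else 0) = r
    revert ht
    generalize x t = u
    generalize x' t = v
    revert u v r
    decide

theorem gks_base : GKSAbs 11 (Fin 11 × Fin 15) := by
  classical
  obtain ⟨g, hg0, hg⟩ := gks_code
  have hgS : ∀ S S', S.card = 4 → S'.card = 4 → g S = g S' → S = S' := fun S S' h h' e =>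
    hg S S' h h' 0 0 fun k _ _ => by rw [e]
  -- the effect of a play in a block
  let a₂ : List (Fin 15) → Bool := fun l =>
    if l.length ≤ 4 then false
    else match l.getLast? with
      | none => false
      | some i => g (l.take 4).toFinset i
  have hplay : ∀ x t, GKSPlay a₂ x t → ∃ S : Finset (Fin 15), S.card = 4 ∧ t ∉ S ∧
      ∀ k, k ≠ t → x k = g S k := by
    rintro x t ⟨l, hnd, hall, hl⟩
    have hlen : l.length = 14 := by
      have h1 : (l ++ [t]).toFinset = Finset.univ := by
        ext i
        simpa [or_comm] using hall i
      have h2 := List.toFinset_card_of_nodup hnd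
      rw [h1] at h2
      simp at h2
      omega
    have hndl : l.Nodup := hnd.of_append_left
    have hc : (l.take 4).toFinset.card = 4 := by
      rw [List.toFinset_card_of_nodup (hndl.sublist (List.take_sublist _ _))]
      simp [hlen]
    refine ⟨(l.take 4).toFinset, hc, ?_, ?_⟩
    · intro h
      have h1 : t ∈ l := List.mem_of_mem_take (List.mem_toFinset.1 h)
      exact (List.disjoint_of_nodup_append hnd) h1 (by simp)
    · intro k hk
      have hkl : k ∈ l := by simpa [hk] using hall k
      obtain ⟨p, s, hps⟩ := List.append_of_mem hkl
      rw [hl p k s hps]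
      by_cases hp : p.length + 1 ≤ 4
      · have : k ∈ (l.take 4).toFinset := by
          rw [List.mem_toFinset, hps, show p ++ k :: s = (p ++ [k]) ++ s by simp,
            List.take_append]
          rw [List.take_of_length_le (by simpa using hp)]
          simp
        rw [hg0 _ hc k this]
        simp only [a₂]
        rw [if_pos (by simpa using hp)]
      · simp only [a₂]
        rw [if_neg (by simpa using hp), List.getLast?_concat]
        simp only
        congr 2
        rw [hps, List.take_append_of_le_length (by omega),
          List.take_append_of_le_length (by omega)]
  let isC : (Fin 15 → Bool) → Prop := fun x => ∃ S : Finset (Fin 15), S.card = 4 ∧ x = g S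
  have hnotC : ∀ x t S, S.card = 4 → (∀ k, k ≠ t → x k = g S k) → x t ≠ g S t → ¬ isC x := by
    rintro x t S hS h1 h2 ⟨S', hS', rfl⟩
    have := hg S' S hS' hS t t fun k hk _ => h1 k hk
    exact h2 (by rw [this])
  have hisC : ∀ x t S, S.card = 4 → (∀ k, k ≠ t → x k = g S k) → x t = g S t → x = g S := by
    intro x t S hS h1 h2
    funext k
    by_cases hk : k = t
    · rw [hk, h2]
    · exact h1 k hk
  refine gks_prod (fun b => if b then 1 else 11) (fun _ => true)
    (fun y => if ∃ j, y j = false then Finset.univ.filter (fun j => y j = false)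
      else Finset.univ) ?_ a₂
    (fun x => Finset.univ.filter (fun i => if isC x then ∀ S, S.card = 4 → x = g S → i ∉ S
      else ∃ S, S.card = 4 ∧ ∀ k, k ≠ i → x k = g S k))
    (fun x => decide (¬ isC x)) ?_ ?_
  · rintro y t ⟨l, hnd, hall, hl⟩
    have hy : ∀ j, j ≠ t → y j = true := by
      intro j hj
      have hjl : j ∈ l := by simpa [hj] using hall j
      obtain ⟨p, s, hps⟩ := List.append_of_mem hjl
      exact hl p j s hps
    by_cases ht : y t = false
    · have hB : Finset.univ.filter (fun j => y j = false) = {t} := by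
        ext j
        simp only [Finset.mem_filter, Finset.mem_univ, true_and, Finset.mem_singleton]
        constructor
        · intro h
          by_contra hj
          rw [hy j hj] at h
          cases h
        · rintro rfl
          exact ht
      rw [if_pos ⟨t, ht⟩, hB]
      simp [ht]
    · have hy' : ∀ j, y j = true := by
        intro j
        by_cases hj : j = t
        · rw [hj]; simpa using ht
        · exact hy j hj
      have : ¬ ∃ j, y j = false := by simp [hy']
      rw [if_neg this]
      simp [hy']
  · intro x t h
    obtain ⟨S, hS, htS, hx⟩ := hplay x t h
    by_cases hxt : x t = g S t
    · have hxS := hisC x t S hS hx hxt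
      have hC : isC x := ⟨S, hS, hxS⟩
      have hB : (Finset.univ.filter (fun i => if isC x then ∀ S, S.card = 4 → x = g S → i ∉ S
          else ∃ S, S.card = 4 ∧ ∀ k, k ≠ i → x k = g S k)) = Sᶜ := by
        ext i
        simp only [Finset.mem_filter, Finset.mem_univ, true_and, if_pos hC, Finset.mem_compl]
        constructor
        · intro h
          exact h S hS hxS
        · intro h S' hS' hxS'
          rw [← hgS S S' hS hS' (hxS ▸ hxS')]
          exact h
      rw [hB]
      refine ⟨by simpa using htS, ?_⟩
      rw [Finset.card_compl, hS]
      simp [hC]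
    · have hC := hnotC x t S hS hx hxt
      have hB : (Finset.univ.filter (fun i => if isC x then ∀ S, S.card = 4 → x = g S → i ∉ S
          else ∃ S, S.card = 4 ∧ ∀ k, k ≠ i → x k = g S k)) = {t} := by
        ext i
        simp only [Finset.mem_filter, Finset.mem_univ, true_and, if_neg hC,
          Finset.mem_singleton]
        constructor
        · rintro ⟨S', hS', h'⟩
          have hSS := hg S S' hS hS' t i fun k hk hk' => by rw [← hx k hk, ← h' k hk']
          by_contra hne
          exact hxt (by rw [h' t (Ne.symm hne), hSS])
        · rintro rfl
          exact ⟨S, hS, hx⟩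
      rw [hB]
      simp [hC]
  · intro x t h x' hx' ht
    obtain ⟨S, hS, htS, hx⟩ := hplay x t h
    have hx2 : ∀ k, k ≠ t → x' k = g S k := fun k hk => by rw [hx' k hk, hx k hk]
    by_cases hxt : x t = g S t
    · have hC : isC x := ⟨S, hS, hisC x t S hS hx hxt⟩
      have hC' : ¬ isC x' := hnotC x' t S hS hx2 (by rw [← hxt]; exact ht)
      simp [hC, hC']
    · have hC : ¬ isC x := hnotC x t S hS hx hxt
      have hx't : x' t = g S t := by
        revert ht hxt
        generalize x t = u
        generalize x' t = v
        generalize g S t = w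
        revert u v w
        decide
      have hC' : isC x' := ⟨S, hS, hisC x' t S hS hx2 hx't⟩
      simp [hC, hC']

theorem gks_abs_pow (k : ℕ) : ∃ (ι : Type) (_ : Fintype ι), Nonempty ι ∧
    Fintype.card ι = 165 ^ k ∧ GKSAbs (11 ^ k) ι := by
  induction k with
  | zero =>
    exact ⟨Unit, inferInstance, inferInstance, by simp,
      fun _ => true, fun _ => Finset.univ, fun x t _ => by simp⟩
  | succ k ih =>
    obtain ⟨ι, hF, hN, hc, h⟩ := ih
    refine ⟨ι × (Fin 11 × Fin 15), inferInstance, inferInstance, ?_, ?_⟩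
    · simp [hc, pow_succ]
    · rw [pow_succ]
      exact gks_mul h gks_base

/-- For every positive integer `k`, there exists an `(11 ^ k, 165 ^ k)`
strategy for the GKS game; equivalently, `C(165 ^ k) ≤ 11 ^ k` for all
`k ≥ 1`. -/
theorem gks_strategy_pow (k : ℕ) (hk : 1 ≤ k) :
    HasGKSStrategy (11 ^ k) (165 ^ k) ∧ gksCost (165 ^ k) ≤ 11 ^ k := by
  have h : HasGKSStrategy (11 ^ k) (165 ^ k) := by
    obtain ⟨ι, hF, _, hc, h⟩ := gks_abs_pow k
    exact gks_bridge (by positivity) (Fintype.equivFinOfCardEq hc).symm h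
  exact ⟨h, Nat.sInf_le h⟩
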